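/- Let A ⊂ ℝ² be a compact, centrally symmetric (A = −A) convex set with nonempty interior, and set s := min_{m ∈ ℤ²∖{0}} sup_{x∈A} ⟨m,x⟩ (the systole of the codisc bundle of the flat reversible Finsler metric with dual unit ball A). If area(A) ≥ 4s² (equivalently, the systolic ratio s²/(2·area(A)) is at most 1/8), then for every vector v ∈ ℝ² with interior(A) + v ⊆ ℝ²_{>0} and every normalized symplectic capacity c on subsets of ℝ⁴, c(μ⁻¹(interior(A)+v)) = 2s. -/

import Mathlib

/-!
Every normalized capacity lies between the Gromov width and the cylindrical capacity, so it suffices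
to embed `U = μ⁻¹(int A + v)` into cylinders of area `2s` and balls of every area below `2s` into
`U`. Let `m` be a covector attaining the minimum `s`; by minimality it is primitive. An integral
affine change of the actions, which lifts to a symplectomorphism of `𝕋² × W`, turns `⟨m, ·⟩` into
the first action. As `|⟨m, ·⟩| < s` on `int A`, this embeds `U` into a cylinder of area `2s`.

Conversely choose `p ∈ A` with `⟨m, p⟩ = s`. A functional separating `q = s (-m₂, m₁)` from `A`
would confine `A` to a parallelogram of area less than `4s²`, so `q ∈ A` and the interior of `A`
contains all `x p + y q` with `|x| + |y| < 1`. In integral coordinates this parallelogram is a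
shear of the square `|P₁| + |P₂| < s`. A disc of area `2T` embeds, up to small error and
compatibly for all `T`, into the rectangle of actions `|P| < T` and angles `|Q| < 1/2`; a product
of two such embeddings sends a ball of area below `2s` into the square times the open unit square
of angles. The shear need not be integral: on a unit square of angles its lift is still injective
modulo periods.
-/

open Set
open scoped Pointwise ENNReal

noncomputable section

/-- The standard symplectic form `ω₀` on `ℝ⁴ ≅ ℂ²`:
`ω₀(u,v) = Σⱼ (u_{xⱼ} v_{yⱼ} - u_{yⱼ} v_{xⱼ}) = Σⱼ Im(conj(uⱼ) · vⱼ)`. -/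
def stdSymp4 (u v : ℂ × ℂ) : ℝ :=
  ((starRingEnd ℂ) u.1 * v.1).im + ((starRingEnd ℂ) u.2 * v.2).im

/-- `U` symplectically embeds into `V` inside `ℝ⁴ ≅ ℂ²`: there is a smooth injective
map on `U` with image in `V` whose derivative preserves `ω₀`. -/
def SymplecticEmbeds4 (U V : Set (ℂ × ℂ)) : Prop :=
  ∃ f : ℂ × ℂ → ℂ × ℂ,
    ContDiffOn ℝ (⊤ : ℕ∞) f U ∧ Set.InjOn f U ∧ Set.MapsTo f U V ∧
    ∀ x ∈ U, ∀ u v : ℂ × ℂ,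
      stdSymp4 (fderivWithin ℝ f U x u) (fderivWithin ℝ f U x v) = stdSymp4 u v

/-- The moment map `μ : ℂ² → ℝ²`, `μ(z) = π(|z₁|², |z₂|²)`. -/
def mu4 (z : ℂ × ℂ) : ℝ × ℝ :=
  (Real.pi * Complex.normSq z.1, Real.pi * Complex.normSq z.2)

/-- The open Euclidean ball `B⁴(r) ⊆ ℂ²`. -/
def ball4 (r : ℝ) : Set (ℂ × ℂ) :=
  {z | Complex.normSq z.1 + Complex.normSq z.2 < r ^ 2}

/-- The open symplectic cylinder `Z⁴(r) = {z ∈ ℂ² : |z₁| < r}`. -/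
def cyl4 (r : ℝ) : Set (ℂ × ℂ) :=
  {z | Complex.normSq z.1 < r ^ 2}

/-- A normalized symplectic capacity on subsets of `ℝ⁴ ≅ ℂ²`: monotone under
symplectic embeddings, conformal, and normalized on balls and cylinders. -/
def IsNormalizedCapacity4 (c : Set (ℂ × ℂ) → ℝ≥0∞) : Prop :=
  (∀ U V : Set (ℂ × ℂ), SymplecticEmbeds4 U V → c U ≤ c V) ∧
  (∀ lam : ℝ, 0 < lam → ∀ U : Set (ℂ × ℂ),
    c (lam • U) = ENNReal.ofReal (lam ^ 2) * c U) ∧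
  (∀ r : ℝ, 0 < r →
    c (ball4 r) = ENNReal.ofReal (Real.pi * r ^ 2) ∧
    c (cyl4 r) = ENNReal.ofReal (Real.pi * r ^ 2))

section SmoothPullback

open scoped Topology

variable {E F G : Type*} [NormedAddCommGroup E] [NormedSpace ℝ E]
  [NormedAddCommGroup F] [NormedSpace ℝ F] [NormedAddCommGroup G] [NormedSpace ℝ G]
  {ω ω' : E → E → ℝ} {η : F → F → ℝ} {θ : G → G → ℝ} {f : E → F} {x : E}

/-- The map `f` is smooth at `x` and its derivative there pulls the two-form `η` back to `ω`.
The forms are plain functions, as `stdSymp4` is. -/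
structure SmoothPullbackAt (f : E → F) (η : F → F → ℝ) (ω : E → E → ℝ) (x : E) : Prop where
  contDiffAt : ContDiffAt ℝ (⊤ : ℕ∞) f x
  map_form : ∀ u v, η (fderiv ℝ f x u) (fderiv ℝ f x v) = ω u v

namespace SmoothPullbackAt

theorem of_hasFDerivAt {f' : E →L[ℝ] F} (hf : ContDiffAt ℝ (⊤ : ℕ∞) f x)
    (hf' : HasFDerivAt f f' x) (h : ∀ u v, η (f' u) (f' v) = ω u v) :
    SmoothPullbackAt f η ω x :=
  ⟨hf, by rwa [hf'.fderiv]⟩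

theorem differentiableAt (hf : SmoothPullbackAt f η ω x) : DifferentiableAt ℝ f x :=
  hf.contDiffAt.differentiableAt (by simp)

theorem congr_of_eventuallyEq {g : E → F} (hf : SmoothPullbackAt f η ω x)
    (h : g =ᶠ[𝓝 x] f) : SmoothPullbackAt g η ω x :=
  ⟨hf.contDiffAt.congr_of_eventuallyEq h, by rw [h.fderiv_eq]; exact hf.map_form⟩

theorem congr_form (hf : SmoothPullbackAt f η ω x) (h : ∀ u v, ω u v = ω' u v) :
    SmoothPullbackAt f η ω' x :=
  ⟨hf.contDiffAt, fun u v => (hf.map_form u v).trans (h u v)⟩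

theorem const_smul (hf : SmoothPullbackAt f η ω x) (c : ℝ) :
    SmoothPullbackAt f (c • η) (c • ω) x :=
  ⟨hf.contDiffAt, fun u v => congrArg (c * ·) (hf.map_form u v)⟩

theorem comp {g : F → G} (hg : SmoothPullbackAt g θ η (f x)) (hf : SmoothPullbackAt f η ω x) :
    SmoothPullbackAt (g ∘ f) θ ω x :=
  of_hasFDerivAt (hg.contDiffAt.comp x hf.contDiffAt)
    (hg.differentiableAt.hasFDerivAt.comp x hf.differentiableAt.hasFDerivAt)
    fun u v => (hg.map_form _ _).trans (hf.map_form u v)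

theorem injective_fderiv (hf : SmoothPullbackAt f η ω x) (hη : ∀ v, η 0 v = 0)
    (hω : ∀ u, (∀ v, ω u v = 0) → u = 0) : Function.Injective (fderiv ℝ f x) := by
  refine (injective_iff_map_eq_zero _).2 fun u hu => hω u fun v => ?_
  rw [← hf.map_form, hu, hη]

theorem of_comp [FiniteDimensional ℝ E] {p : E → E} {η : E → E → ℝ}
    {θ : F → F → ℝ} (hfp : SmoothPullbackAt (f ∘ p) θ ω x) (hp : SmoothPullbackAt p η ω x)
    (hη : ∀ v, η 0 v = 0) (hω : ∀ u, (∀ v, ω u v = 0) → u = 0) :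
    SmoothPullbackAt f θ η (p x) := by
  have : CompleteSpace E := FiniteDimensional.complete ℝ E
  let e : E ≃L[ℝ] E := (LinearEquiv.ofInjectiveEndo (fderiv ℝ p x : E →ₗ[ℝ] E)
    (hp.injective_fderiv hη hω)).toContinuousLinearEquiv
  have he : HasFDerivAt p (e : E →L[ℝ] E) x := by
    have : (e : E →L[ℝ] E) = fderiv ℝ p x := ContinuousLinearMap.ext fun _ => rfl
    exact this ▸ hp.differentiableAt.hasFDerivAt
  let q := hp.contDiffAt.localInverse he (by simp)
  have hq : q (p x) = x := hp.contDiffAt.localInverse_apply_image he (by simp)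
  have hpq : ∀ᶠ y in 𝓝 (p x), p (q y) = y :=
    (hp.contDiffAt.hasStrictFDerivAt' he (by simp)).eventually_right_inverse
  have hf : ContDiffAt ℝ (⊤ : ℕ∞) f (p x) := by
    refine ContDiffAt.congr_of_eventuallyEq (f := (f ∘ p) ∘ q) ?_ ?_
    · exact (ContDiffAt.comp _ (by rw [hq]; exact hfp.contDiffAt)
        (hp.contDiffAt.to_localInverse he (by simp)))
    · filter_upwards [hpq] with y hy
      rw [Function.comp_apply, Function.comp_apply, hy]
  refine ⟨hf, fun u v => ?_⟩
  obtain ⟨u, rfl⟩ := e.surjective u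
  obtain ⟨v, rfl⟩ := e.surjective v
  have hfe : fderiv ℝ (f ∘ p) x = (fderiv ℝ f (p x)).comp (e : E →L[ℝ] E) :=
    ((hf.differentiableAt (by simp)).hasFDerivAt.comp x he).fderiv
  calc θ (fderiv ℝ f (p x) (e u)) (fderiv ℝ f (p x) (e v)) = ω u v := by
        rw [← hfp.map_form, hfe]; rfl
    _ = η (e u) (e v) := by rw [← hp.map_form, he.fderiv]; rfl

end SmoothPullbackAt

end SmoothPullback

section AreaForm

open scoped ComplexConjugate Topology

/-- The standard area form `dx ∧ dy` on `ℝ² ≅ ℂ`, of which `stdSymp4` is the double. -/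
def stdSymp2 (u v : ℂ) : ℝ := (conj u * v).im

theorem stdSymp2_apply (u v : ℂ) : stdSymp2 u v = u.re * v.im - u.im * v.re := by
  simp only [stdSymp2, Complex.mul_im, Complex.conj_re, Complex.conj_im]
  ring

theorem stdSymp4_apply (u v : ℂ × ℂ) :
    stdSymp4 u v = stdSymp2 u.1 v.1 + stdSymp2 u.2 v.2 := rfl

theorem stdSymp2_self_mul_I (u : ℂ) : stdSymp2 u (Complex.I * u) = Complex.normSq u := by
  simp [stdSymp2_apply, Complex.normSq_apply]

theorem stdSymp4_zero_left (v : ℂ × ℂ) : stdSymp4 0 v = 0 := by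
  simp [stdSymp4_apply, stdSymp2_apply]

theorem eq_zero_of_forall_stdSymp4_eq_zero {u : ℂ × ℂ} (h : ∀ v, stdSymp4 u v = 0) :
    u = 0 := by
  have h₁ := h (Complex.I * u.1, 0)
  have h₂ := h (0, Complex.I * u.2)
  simp only [stdSymp4_apply, stdSymp2_self_mul_I] at h₁ h₂
  ext1
  · simpa [stdSymp2_apply] using h₁
  · simpa [stdSymp2_apply] using h₂

/-- The map `f` is smooth at `x` and preserves `stdSymp4` there. -/
abbrev SymplecticAt (f : ℂ × ℂ → ℂ × ℂ) (x : ℂ × ℂ) : Prop :=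
  SmoothPullbackAt f stdSymp4 stdSymp4 x

theorem SymplecticAt.prodMap {f g : ℂ → ℂ} {z : ℂ × ℂ}
    (hf : SmoothPullbackAt f stdSymp2 stdSymp2 z.1)
    (hg : SmoothPullbackAt g stdSymp2 stdSymp2 z.2) : SymplecticAt (Prod.map f g) z := by
  refine .of_hasFDerivAt (hf.contDiffAt.prodMap' hg.contDiffAt)
    (hf.differentiableAt.hasFDerivAt.prodMap z hg.differentiableAt.hasFDerivAt) fun u v =>
      congrArg₂ (· + ·) (hf.map_form u.1 v.1) (hg.map_form u.2 v.2)

theorem SymplecticAt.of_comp {f p : ℂ × ℂ → ℂ × ℂ} {x : ℂ × ℂ} (hfp : SymplecticAt (f ∘ p) x)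
    (hp : SymplecticAt p x) : SymplecticAt f (p x) :=
  SmoothPullbackAt.of_comp hfp hp stdSymp4_zero_left fun _ => eq_zero_of_forall_stdSymp4_eq_zero

theorem SymplecticEmbeds4.of_symplecticAt {U V : Set (ℂ × ℂ)} {f : ℂ × ℂ → ℂ × ℂ}
    (hU : IsOpen U) (hf : ∀ x ∈ U, SymplecticAt f x) (hinj : InjOn f U) (hmaps : MapsTo f U V) :
    SymplecticEmbeds4 U V :=
  ⟨f, fun x hx => (hf x hx).contDiffAt.contDiffWithinAt, hinj, hmaps, fun x hx => by
    rw [fderivWithin_of_isOpen hU hx]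
    exact (hf x hx).map_form⟩

/-- The map `f` is smooth at `z` with Jacobian determinant `J` there, i.e. `f^*ω = J ω` for the
standard area form `ω`. -/
abbrev AreaJacobianAt (f : ℂ → ℂ) (J : ℝ) (z : ℂ) : Prop :=
  SmoothPullbackAt f stdSymp2 (J • stdSymp2) z

theorem AreaJacobianAt.comp {f g : ℂ → ℂ} {J K : ℝ} {z : ℂ} (hg : AreaJacobianAt g K (f z))
    (hf : AreaJacobianAt f J z) : AreaJacobianAt (g ∘ f) (K * J) z :=
  (SmoothPullbackAt.comp hg (hf.const_smul K)).congr_form fun u v =>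
    (mul_assoc K J (stdSymp2 u v)).symm

theorem AreaJacobianAt.congr_jacobian {f : ℂ → ℂ} {J J' : ℝ} {z : ℂ} (hf : AreaJacobianAt f J z)
    (hJ : J = J') : AreaJacobianAt f J' z :=
  hJ ▸ hf

theorem AreaJacobianAt.smoothPullbackAt {f : ℂ → ℂ} {J : ℝ} {z : ℂ} (hf : AreaJacobianAt f J z)
    (hJ : J = 1) : SmoothPullbackAt f stdSymp2 stdSymp2 z :=
  hf.congr_form fun u v => by simp [hJ]

theorem areaJacobianAt_of_hasDerivAt {f : ℂ → ℂ} {f' z : ℂ} (hf : ContDiffAt ℝ (⊤ : ℕ∞) f z)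
    (hf' : HasDerivAt f f' z) : AreaJacobianAt f (Complex.normSq f') z := by
  refine .of_hasFDerivAt hf hf'.complexToReal_fderiv fun u v => ?_
  simp only [smul_apply, one_apply_eq_self, smul_eq_mul, stdSymp2_apply, Complex.mul_re,
    Complex.mul_im, Complex.normSq_apply, Pi.smul_apply]
  ring

theorem areaJacobianAt_mk {p q : ℂ → ℝ} {p' q' : ℂ →L[ℝ] ℝ} {z : ℂ}
    (hp : ContDiffAt ℝ (⊤ : ℕ∞) p z) (hq : ContDiffAt ℝ (⊤ : ℕ∞) q z)
    (hp' : HasFDerivAt p p' z) (hq' : HasFDerivAt q q' z) :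
    AreaJacobianAt (fun w => ⟨p w, q w⟩) (p' 1 * q' Complex.I - p' Complex.I * q' 1) z := by
  have key : ∀ (l : ℂ →L[ℝ] ℝ) (u : ℂ), l u = u.re * l 1 + u.im * l Complex.I := fun l u => by
    conv_lhs => rw [← Complex.re_add_im u]
    rw [map_add, ← mul_one (u.re : ℂ), ← Complex.real_smul, ← Complex.real_smul, map_smul,
      map_smul, smul_eq_mul, smul_eq_mul]
  let e : ℝ × ℝ →L[ℝ] ℂ := Complex.equivRealProdCLM.symm
  refine .of_hasFDerivAt (f' := e.comp (p'.prod q')) (e.contDiff.contDiffAt.comp z (hp.prodMk hq))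
    (e.hasFDerivAt.comp z (hp'.prodMk hq')) fun u v => ?_
  change stdSymp2 ⟨p' u, q' u⟩ ⟨p' v, q' v⟩ = _ * stdSymp2 u v
  rw [stdSymp2_apply, stdSymp2_apply, key p' u, key q' u, key p' v, key q' v]
  ring

theorem areaJacobianAt_mk_re {g : ℂ → ℝ} {J : ℝ} {z : ℂ} (hg : ContDiffAt ℝ (⊤ : ℕ∞) g z)
    (hJ : HasDerivAt (fun t : ℝ => g ⟨z.re, t⟩) J z.im) :
    AreaJacobianAt (fun w => ⟨w.re, g w⟩) J z := by
  have hg' := (hg.differentiableAt (by simp)).hasFDerivAt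
  have hI : HasDerivAt (fun t : ℝ => (⟨z.re, t⟩ : ℂ)) Complex.I z.im := by
    have h := (Complex.ofRealCLM.hasDerivAt (x := z.im)).mul_const Complex.I |>.const_add (z.re : ℂ)
    simpa [Complex.mk_eq_add_mul_I] using h
  have hJ' : fderiv ℝ g z Complex.I = J :=
    (HasFDerivAt.comp_hasDerivAt z.im (by exact hg') hI).unique hJ
  refine (areaJacobianAt_mk Complex.reCLM.contDiff.contDiffAt hg Complex.reCLM.hasFDerivAt
    hg').congr_form fun u v => ?_
  simp [hJ']

theorem areaJacobianAt_mk_im {f : ℂ → ℝ} {J : ℝ} {z : ℂ} (hf : ContDiffAt ℝ (⊤ : ℕ∞) f z)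
    (hJ : HasDerivAt (fun t : ℝ => f ⟨t, z.im⟩) J z.re) :
    AreaJacobianAt (fun w => ⟨f w, w.im⟩) J z := by
  have hf' := (hf.differentiableAt (by simp)).hasFDerivAt
  have h1 : HasDerivAt (fun t : ℝ => (⟨t, z.im⟩ : ℂ)) 1 z.re := by
    have h := (Complex.ofRealCLM.hasDerivAt (x := z.re)).add_const (z.im * Complex.I : ℂ)
    simpa [Complex.mk_eq_add_mul_I] using h
  have hJ' : fderiv ℝ f z 1 = J :=
    (HasFDerivAt.comp_hasDerivAt z.re (by exact hf') h1).unique hJ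
  refine (areaJacobianAt_mk hf Complex.imCLM.contDiff.contDiffAt hf'
    Complex.imCLM.hasFDerivAt).congr_form fun u v => ?_
  simp [hJ']

theorem areaJacobianAt_radial {φ : ℝ → ℝ} {φ' : ℝ} {z : ℂ}
    (hφ : ContDiffAt ℝ (⊤ : ℕ∞) φ (‖z‖ ^ 2)) (hφ' : HasDerivAt φ φ' (‖z‖ ^ 2)) :
    AreaJacobianAt (fun w => φ (‖w‖ ^ 2) • w)
      (φ (‖z‖ ^ 2) ^ 2 + 2 * φ (‖z‖ ^ 2) * φ' * ‖z‖ ^ 2) z := by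
  have hN : HasFDerivAt (fun w : ℂ => φ (‖w‖ ^ 2)) _ z :=
    hφ'.comp_hasFDerivAt z (hasStrictFDerivAt_norm_sq z).hasFDerivAt
  refine .of_hasFDerivAt ((hφ.comp z (contDiff_norm_sq ℝ).contDiffAt).smul contDiffAt_id)
    (hN.smul (hasFDerivAt_id z)) fun u v => ?_
  simp only [Complex.sq_norm, Complex.normSq_apply, add_apply, smul_apply,
    ContinuousLinearMap.id_apply, Complex.real_smul, ContinuousLinearMap.smulRight_apply,
    coe_innerSL_apply, Complex.inner, Complex.mul_re, Complex.conj_re, Complex.conj_im, mul_neg,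
    sub_neg_eq_add, smul_add, nsmul_eq_mul, Nat.cast_ofNat, smul_eq_mul, Complex.ofReal_mul,
    Complex.ofReal_add, Complex.ofReal_ofNat, stdSymp2_apply, Complex.add_re, Complex.ofReal_re,
    Complex.ofReal_im, zero_mul, sub_zero, Complex.re_ofNat, mul_zero, Complex.im_ofNat,
    Complex.mul_im, add_zero, Complex.add_im, Pi.smul_apply]
  ring

end AreaForm

section ActionAngle

open scoped Real
open Real (pi_pos pi_ne_zero)
open Complex (I normSq)

/-- Action-angle coordinates on `ℂ ∖ {0}`: for `w = P + iQ` with action `P > 0` the point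
`actionAngle w` has `π|z|² = P` and argument `2πQ`. The angle `Q` has period `1`. -/
def actionAngle (w : ℂ) : ℂ := Complex.exp ⟨Real.log (w.re / π) / 2, 2 * π * w.im⟩

theorem normSq_actionAngle {w : ℂ} (hw : 0 < w.re) : normSq (actionAngle w) = w.re / π := by
  rw [← Complex.sq_norm, actionAngle, Complex.norm_exp, ← Real.exp_nat_mul]
  push_cast
  rw [mul_div_cancel₀ _ two_ne_zero, Real.exp_log (div_pos hw pi_pos)]

theorem smoothPullbackAt_actionAngle {w : ℂ} (hw : 0 < w.re) :
    SmoothPullbackAt actionAngle stdSymp2 stdSymp2 w := by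
  have hangle : AreaJacobianAt (fun w => ⟨w.re, 2 * π * w.im⟩) (2 * π) w :=
    areaJacobianAt_mk_re (contDiffAt_const.mul Complex.imCLM.contDiff.contDiffAt)
      (by simpa using (hasDerivAt_id w.im).const_mul (2 * π))
  have haction (y : ℝ) :
      AreaJacobianAt (fun w => ⟨Real.log (w.re / π) / 2, w.im⟩) (1 / (2 * w.re)) ⟨w.re, y⟩ := by
    have hne : w.re / π ≠ 0 := (div_pos hw pi_pos).ne'
    have hsmooth : ContDiffAt ℝ (⊤ : ℕ∞) Complex.re ⟨w.re, y⟩ :=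
      Complex.reCLM.contDiff.contDiffAt
    refine areaJacobianAt_mk_im (((hsmooth.div_const π).log hne).div_const 2) ?_
    refine ((((hasDerivAt_id w.re).div_const π).log hne).div_const 2).congr_deriv ?_
    rw [id_eq]
    field_simp
  have hexp := areaJacobianAt_of_hasDerivAt (z := ⟨Real.log (w.re / π) / 2, 2 * π * w.im⟩)
    ((Complex.contDiff_exp (𝕜 := ℝ)).contDiffAt)
    (Complex.hasDerivAt_exp _)
  refine (AreaJacobianAt.comp (AreaJacobianAt.comp hexp (haction _)) hangle).smoothPullbackAt ?_
  rw [← actionAngle, normSq_actionAngle hw]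
  field_simp

theorem actionAngle_eq_iff {w w' : ℂ} (hw : 0 < w.re) (hw' : 0 < w'.re) :
    actionAngle w = actionAngle w' ↔ ∃ n : ℤ, w = w' + n * I := by
  have hlog : Real.log (w.re / π) / 2 = Real.log (w'.re / π) / 2 ↔ w.re = w'.re := by
    rw [div_left_inj' two_ne_zero, Real.log_injOn_pos.eq_iff (div_pos hw pi_pos)
      (div_pos hw' pi_pos), div_left_inj' pi_ne_zero]
  rw [actionAngle, actionAngle, Complex.exp_eq_exp_iff_exists_int]
  refine exists_congr fun n => ?_
  have him : 2 * π * w.im = 2 * π * w'.im + n * (2 * π) ↔ w.im = w'.im + n := by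
    rw [mul_comm (n : ℝ), ← mul_add, mul_right_inj' (by positivity)]
  simp only [Complex.ext_iff]
  simpa [hlog] using fun _ => him

/-- The section of `actionAngle` with angle in `(-1/2, 1/2]`. -/
def actionAngleSection (z : ℂ) : ℂ := ⟨π * normSq z, z.arg / (2 * π)⟩

theorem actionAngle_actionAngleSection {z : ℂ} (hz : z ≠ 0) :
    actionAngle (actionAngleSection z) = z := by
  have h : (⟨Real.log (π * normSq z / π) / 2, 2 * π * (z.arg / (2 * π))⟩ : ℂ) =
      Complex.log z := by
    rw [mul_div_cancel_left₀ _ pi_ne_zero, ← Complex.sq_norm, Real.log_pow,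
      mul_div_cancel₀ _ (by positivity)]
    push_cast
    rw [mul_div_cancel_left₀ _ two_ne_zero]
    exact Complex.ext (Complex.log_re z).symm (Complex.log_im z).symm
  exact (congrArg Complex.exp h).trans (Complex.exp_log hz)

/-- Toric coordinates on `(ℂ ∖ {0})²`: `w = (P₁ + iQ₁, P₂ + iQ₂)` with actions `P ∈ ℝ²_{>0}`
and angles `Q` is sent to the point of the torus `μ⁻¹(P)` with arguments `2πQ`. -/
def toricCoord : ℂ × ℂ → ℂ × ℂ := Prod.map actionAngle actionAngle

/-- The actions `(P₁, P₂)` of `w = (P₁ + iQ₁, P₂ + iQ₂)`. -/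
def actions (w : ℂ × ℂ) : ℝ × ℝ := (w.1.re, w.2.re)

/-- The translation by `(n₁, n₂)` in the angles, under which `toricCoord` is periodic. -/
def angleShift (n : ℤ × ℤ) : ℂ × ℂ := (n.1 * I, n.2 * I)

/-- The open quadrant `ℝ²_{>0}`. -/
def openQuadrant : Set (ℝ × ℝ) := {P | 0 < P.1 ∧ 0 < P.2}

theorem mu4_toricCoord {w : ℂ × ℂ} (hw : actions w ∈ openQuadrant) :
    mu4 (toricCoord w) = actions w := by
  simp only [mu4, toricCoord, Prod.map_fst, Prod.map_snd, normSq_actionAngle hw.1,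
    normSq_actionAngle hw.2, mul_div_cancel₀ _ pi_ne_zero, actions]

theorem symplecticAt_toricCoord {w : ℂ × ℂ} (hw : actions w ∈ openQuadrant) :
    SymplecticAt toricCoord w :=
  .prodMap (smoothPullbackAt_actionAngle hw.1) (smoothPullbackAt_actionAngle hw.2)

theorem toricCoord_eq_iff {w w' : ℂ × ℂ} (hw : actions w ∈ openQuadrant)
    (hw' : actions w' ∈ openQuadrant) :
    toricCoord w = toricCoord w' ↔ ∃ n, w = w' + angleShift n := by
  simp only [toricCoord, Prod.ext_iff, Prod.map_fst, Prod.map_snd, actionAngle_eq_iff hw.1 hw'.1,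
    actionAngle_eq_iff hw.2 hw'.2, Prod.exists, angleShift, Prod.fst_add, Prod.snd_add,
    exists_and_left, exists_and_right]

/-- The section of `toricCoord` with angles in `(-1/2, 1/2]`. -/
def toricSection : ℂ × ℂ → ℂ × ℂ := Prod.map actionAngleSection actionAngleSection

theorem actions_toricSection (z : ℂ × ℂ) : actions (toricSection z) = mu4 z := rfl

theorem toricCoord_toricSection {z : ℂ × ℂ} (hz : mu4 z ∈ openQuadrant) :
    toricCoord (toricSection z) = z := by
  have hne : ∀ {x : ℂ}, 0 < π * normSq x → x ≠ 0 := fun h hx => by simp [hx] at h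
  exact Prod.ext (actionAngle_actionAngleSection (hne hz.1))
    (actionAngle_actionAngleSection (hne hz.2))

end ActionAngle

section CotangentLift

open scoped Topology
open Complex (I)

/-- The affine map `P ↦ (a b; c d) P + v` of the plane. -/
def planeAffine (a b c d : ℝ) (v P : ℝ × ℝ) : ℝ × ℝ :=
  (a * P.1 + b * P.2 + v.1, c * P.1 + d * P.2 + v.2)

/-- The linear map acting on the actions `P` by `(a b; c d)` and on the angles `Q` by its
inverse transpose, provided the determinant is `1`. -/
def cotangentLinear (a b c d : ℝ) : ℂ × ℂ →L[ℝ] ℂ × ℂ :=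
  LinearMap.toContinuousLinearMap
    { toFun := fun w => (⟨a * w.1.re + b * w.2.re, d * w.1.im - c * w.2.im⟩,
        ⟨c * w.1.re + d * w.2.re, -b * w.1.im + a * w.2.im⟩)
      map_add' := fun w w' => by
        simp only [Prod.ext_iff, Complex.ext_iff, Prod.fst_add, Prod.snd_add, Complex.add_re,
          Complex.add_im]
        refine ⟨⟨?_, ?_⟩, ?_, ?_⟩ <;> ring
      map_smul' := fun t w => by
        simp only [Prod.ext_iff, Complex.ext_iff, Prod.smul_fst, Prod.smul_snd, Complex.smul_re,
          Complex.smul_im, smul_eq_mul, RingHom.id_apply]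
        refine ⟨⟨?_, ?_⟩, ?_, ?_⟩ <;> ring }

/-- The cotangent lift of `planeAffine a b c d v` to actions and angles. -/
def cotangentLift (a b c d : ℝ) (v : ℝ × ℝ) (w : ℂ × ℂ) : ℂ × ℂ :=
  cotangentLinear a b c d w + ((v.1 : ℂ), (v.2 : ℂ))

variable {a b c d : ℝ}

theorem cotangentLinear_apply (w : ℂ × ℂ) :
    cotangentLinear a b c d w = (⟨a * w.1.re + b * w.2.re, d * w.1.im - c * w.2.im⟩,
      ⟨c * w.1.re + d * w.2.re, -b * w.1.im + a * w.2.im⟩) := rfl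

theorem cotangentLift_add (v : ℝ × ℝ) (w w' : ℂ × ℂ) :
    cotangentLift a b c d v (w + w') = cotangentLift a b c d v w + cotangentLinear a b c d w' := by
  rw [cotangentLift, cotangentLift, map_add, add_right_comm]

theorem cotangentLinear_cotangentLinear (hdet : a * d - b * c = 1) (w : ℂ × ℂ) :
    cotangentLinear d (-b) (-c) a (cotangentLinear a b c d w) = w := by
  simp only [cotangentLinear_apply, Prod.ext_iff, Complex.ext_iff]
  refine ⟨⟨?_, ?_⟩, ?_, ?_⟩
  · linear_combination w.1.re * hdet
  · linear_combination w.1.im * hdet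
  · linear_combination w.2.re * hdet
  · linear_combination w.2.im * hdet

theorem cotangentLift_injective (hdet : a * d - b * c = 1) (v : ℝ × ℝ) :
    Function.Injective (cotangentLift a b c d v) := fun _ _ h =>
  Function.LeftInverse.injective (cotangentLinear_cotangentLinear hdet) (add_right_cancel h)

theorem symplecticAt_cotangentLift (hdet : a * d - b * c = 1) (v : ℝ × ℝ) (w : ℂ × ℂ) :
    SymplecticAt (cotangentLift a b c d v) w := by
  refine .of_hasFDerivAt ((cotangentLinear a b c d).contDiff.contDiffAt.add contDiffAt_const)
    ((cotangentLinear a b c d).hasFDerivAt.add_const _) fun x y => ?_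
  simp only [cotangentLinear_apply, stdSymp4_apply, stdSymp2_apply]
  linear_combination
    (x.1.re * y.1.im - x.1.im * y.1.re + x.2.re * y.2.im - x.2.im * y.2.re) * hdet

theorem cotangentLinear_angleShift (a b c d : ℤ) (n : ℤ × ℤ) :
    cotangentLinear a b c d (angleShift n) =
      angleShift (d * n.1 - c * n.2, -b * n.1 + a * n.2) := by
  simp [cotangentLinear_apply, angleShift, Complex.ext_iff]

theorem exists_cotangentLift_eq_add_angleShift_iff {a b c d : ℤ} (hdet : a * d - b * c = 1)
    (v : ℝ × ℝ) (w w' : ℂ × ℂ) :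
    (∃ n, cotangentLift a b c d v w = cotangentLift a b c d v w' + angleShift n) ↔
      ∃ n, w = w' + angleShift n := by
  constructor
  · rintro ⟨n, hn⟩
    have hdetR : (a : ℝ) * d - b * c = 1 := by exact_mod_cast hdet
    refine ⟨(a * n.1 + c * n.2, b * n.1 + d * n.2), cotangentLift_injective hdetR v ?_⟩
    rw [hn, cotangentLift_add, cotangentLinear_angleShift]
    congr 2
    ext
    · linear_combination -n.1 * hdet
    · linear_combination -n.2 * hdet
  · rintro ⟨n, rfl⟩
    exact ⟨_, by rw [cotangentLift_add, cotangentLinear_angleShift]⟩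

theorem continuous_mu4 : Continuous mu4 := by
  unfold mu4
  fun_prop

theorem continuous_actions : Continuous actions := by
  unfold actions
  fun_prop

theorem symplecticEmbeds4_preimage_mu4_of_planeAffine {W W' : Set (ℝ × ℝ)} {a b c d : ℤ}
    {v : ℝ × ℝ} (hW : IsOpen W) (hWpos : W ⊆ openQuadrant) (hW'pos : W' ⊆ openQuadrant)
    (hdet : a * d - b * c = 1) (hmaps : MapsTo (planeAffine a b c d v) W W') :
    SymplecticEmbeds4 (mu4 ⁻¹' W) (mu4 ⁻¹' W') := by
  let L : ℂ × ℂ → ℂ × ℂ := cotangentLift a b c d v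
  let f : ℂ × ℂ → ℂ × ℂ := toricCoord ∘ L ∘ toricSection
  have hdetR : (a : ℝ) * d - b * c = 1 := by exact_mod_cast hdet
  have hLpos {w : ℂ × ℂ} (hw : actions w ∈ W) : actions (L w) ∈ openQuadrant :=
    hW'pos (hmaps hw)
  have hLiff {w w' : ℂ × ℂ} (hw : actions w ∈ W) (hw' : actions w' ∈ W) :
      toricCoord (L w) = toricCoord (L w') ↔ toricCoord w = toricCoord w' := by
    rw [toricCoord_eq_iff (hLpos hw) (hLpos hw'), toricCoord_eq_iff (hWpos hw) (hWpos hw'),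
      exists_cotangentLift_eq_add_angleShift_iff hdet]
  have hf {w : ℂ × ℂ} (hw : actions w ∈ W) : f (toricCoord w) = toricCoord (L w) := by
    have hmu := mu4_toricCoord (hWpos hw)
    exact (hLiff (by rwa [actions_toricSection, hmu]) hw).2
      (toricCoord_toricSection (by rw [hmu]; exact hWpos hw))
  have hsec {z : ℂ × ℂ} (hz : mu4 z ∈ W) :
      actions (toricSection z) ∈ W ∧ toricCoord (toricSection z) = z :=
    ⟨hz, toricCoord_toricSection (hWpos hz)⟩
  refine .of_symplecticAt (f := f) (hW.preimage continuous_mu4) (fun z hz => ?_)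
    (fun z hz z' hz' h => ?_) fun z hz => ?_
  · obtain ⟨hw, hwz⟩ := hsec hz
    rw [← hwz]
    refine .of_comp (SmoothPullbackAt.congr_of_eventuallyEq (SmoothPullbackAt.comp
      (symplecticAt_toricCoord (hLpos hw)) (symplecticAt_cotangentLift hdetR v _)) ?_)
      (symplecticAt_toricCoord (hWpos hw))
    filter_upwards [(hW.preimage continuous_actions).mem_nhds hw] with w hw
    exact hf hw
  · have := (hLiff (hsec hz).1 (hsec hz').1).1 h
    rwa [(hsec hz).2, (hsec hz').2] at this
  · rw [mem_preimage, ← (hsec hz).2, hf (hsec hz).1, mu4_toricCoord (hLpos (hsec hz).1)]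
    exact hmaps (hsec hz).1

end CotangentLift

section StripMap

open scoped Real
open Real (pi_pos pi_ne_zero)

/-- The first factor of `stripMap`, a radial rescaling. -/
def stripRadial (b : ℝ) (z : ℂ) : ℂ := √(π * (π / 4 * ‖z‖ ^ 2 + b)) • z

/-- The second factor of `stripMap`, compressing each vertical line to a segment. -/
def stripVertical (b : ℝ) (w : ℂ) : ℂ := ⟨w.re, Real.arctan (w.im / √(w.re ^ 2 + b ^ 2)) / π⟩

/-- The third factor of `stripMap`, stretching each horizontal line. -/
def stripHorizontal (w : ℂ) : ℂ := ⟨w.re / Real.cos (π * w.im), w.im⟩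

/-- An area preserving embedding of the plane into the strip `|q| < 1/2` which takes the circle
`π|z|² = 2(T - b)` to the curve `p² + b² sec²(πq) = T²`. As `b → 0` the disc of area `2T` thus
fills the rectangle `|p| < T`, `|q| < 1/2`. -/
def stripMap (b : ℝ) : ℂ → ℂ := stripHorizontal ∘ stripVertical b ∘ stripRadial b

variable {b : ℝ}

theorem sq_norm_stripRadial_add_sq (hb : 0 < b) (z : ℂ) :
    ‖stripRadial b z‖ ^ 2 + b ^ 2 = (π / 2 * ‖z‖ ^ 2 + b) ^ 2 := by
  rw [stripRadial, norm_smul, mul_pow, Real.norm_eq_abs, sq_abs, Real.sq_sqrt (by positivity)]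
  ring

theorem areaJacobianAt_stripRadial (hb : 0 < b) (z : ℂ) :
    AreaJacobianAt (stripRadial b) (π * (π / 2 * ‖z‖ ^ 2 + b)) z := by
  have hpos : 0 < π * (π / 4 * ‖z‖ ^ 2 + b) := by positivity
  have hφ : HasDerivAt (fun t : ℝ => √(π * (π / 4 * t + b))) _ (‖z‖ ^ 2) :=
    ((((hasDerivAt_id _).const_mul (π / 4)).add_const b).const_mul π).sqrt hpos.ne'
  have hsmooth : ContDiffAt ℝ (⊤ : ℕ∞) (fun t : ℝ => √(π * (π / 4 * t + b))) (‖z‖ ^ 2) :=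
    ContDiffAt.sqrt (by fun_prop) hpos.ne'
  refine (areaJacobianAt_radial hsmooth hφ).congr_jacobian ?_
  rw [Real.sq_sqrt hpos.le, id_eq]
  have := Real.sqrt_pos.2 hpos
  field_simp
  ring

theorem stripRadial_injective (hb : 0 < b) : Function.Injective (stripRadial b) := by
  intro z z' h
  have hsq := sq_norm_stripRadial_add_sq hb z
  rw [h, sq_norm_stripRadial_add_sq hb z', sq_eq_sq₀ (by positivity) (by positivity),
    add_left_inj, mul_right_inj' (by positivity)] at hsq
  rw [stripRadial, stripRadial, hsq] at h
  exact smul_right_injective ℂ (by positivity) h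

theorem areaJacobianAt_stripVertical (hb : 0 < b) (w : ℂ) :
    AreaJacobianAt (stripVertical b) (√(w.re ^ 2 + b ^ 2) / (π * (‖w‖ ^ 2 + b ^ 2))) w := by
  have hpos : 0 < w.re ^ 2 + b ^ 2 := by positivity
  have hre : ContDiffAt ℝ (⊤ : ℕ∞) Complex.re w := Complex.reCLM.contDiff.contDiffAt
  have him : ContDiffAt ℝ (⊤ : ℕ∞) Complex.im w := Complex.imCLM.contDiff.contDiffAt
  have hD := Real.sqrt_pos.2 hpos
  have hsmooth := (him.div (((hre.pow 2).add contDiffAt_const).sqrt hpos.ne') hD.ne')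
  refine areaJacobianAt_mk_re ((Real.contDiff_arctan.contDiffAt.comp w hsmooth).div_const π) ?_
  refine ((((hasDerivAt_id w.im).div_const √(w.re ^ 2 + b ^ 2)).arctan).div_const
    π).congr_deriv ?_
  rw [Complex.sq_norm, Complex.normSq_apply, id_eq]
  field_simp
  rw [Real.sq_sqrt hpos.le]
  ring

theorem stripVertical_injective (hb : 0 < b) : Function.Injective (stripVertical b) := by
  intro w w' h
  obtain ⟨hre, him⟩ := Complex.ext_iff.1 h
  simp only [stripVertical] at hre him
  rw [div_left_inj' pi_ne_zero, Real.arctan_injective.eq_iff, hre,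
    div_left_inj' (by positivity)] at him
  exact Complex.ext hre him

theorem abs_im_stripVertical_lt (b : ℝ) (w : ℂ) : |(stripVertical b w).im| < 1 / 2 := by
  rw [stripVertical, abs_div, abs_of_pos pi_pos, div_lt_iff₀ pi_pos, one_div_mul_eq_div]
  exact abs_lt.2 ⟨Real.neg_pi_div_two_lt_arctan _, Real.arctan_lt_pi_div_two _⟩

theorem cos_pi_mul_im_stripVertical (hb : 0 < b) (w : ℂ) :
    Real.cos (π * (stripVertical b w).im) = √(w.re ^ 2 + b ^ 2) / √(‖w‖ ^ 2 + b ^ 2) := by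
  have hpos : 0 < w.re ^ 2 + b ^ 2 := by positivity
  have h : 1 + (w.im / √(w.re ^ 2 + b ^ 2)) ^ 2 = (‖w‖ ^ 2 + b ^ 2) / (w.re ^ 2 + b ^ 2) := by
    rw [div_pow, Real.sq_sqrt hpos.le, Complex.sq_norm, Complex.normSq_apply]
    field_simp
    ring
  rw [stripVertical, mul_div_cancel₀ _ pi_ne_zero, Real.cos_arctan, h,
    Real.sqrt_div (by positivity), one_div_div]

theorem cos_pi_mul_pos {q : ℝ} (hq : |q| < 1 / 2) : 0 < Real.cos (π * q) := by
  obtain ⟨h₁, h₂⟩ := abs_lt.1 hq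
  exact Real.cos_pos_of_mem_Ioo ⟨by nlinarith [pi_pos], by nlinarith [pi_pos]⟩

theorem areaJacobianAt_stripHorizontal {w : ℂ} (hw : |w.im| < 1 / 2) :
    AreaJacobianAt stripHorizontal (1 / Real.cos (π * w.im)) w :=
  have hre : ContDiffAt ℝ (⊤ : ℕ∞) Complex.re w := Complex.reCLM.contDiff.contDiffAt
  have him : ContDiffAt ℝ (⊤ : ℕ∞) Complex.im w := Complex.imCLM.contDiff.contDiffAt
  areaJacobianAt_mk_im
    (hre.div (Real.contDiff_cos.contDiffAt.comp w (contDiffAt_const.mul him))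
      (cos_pi_mul_pos hw).ne')
    ((hasDerivAt_id w.re).div_const (Real.cos (π * w.im)))

theorem stripHorizontal_injOn : InjOn stripHorizontal {w | |w.im| < 1 / 2} := by
  intro w hw w' _ h
  obtain ⟨hre, him⟩ := Complex.ext_iff.1 h
  simp only [stripHorizontal] at hre him
  rw [← him, div_left_inj' (cos_pi_mul_pos hw).ne'] at hre
  exact Complex.ext hre him

theorem smoothPullbackAt_stripMap (hb : 0 < b) (z : ℂ) :
    SmoothPullbackAt (stripMap b) stdSymp2 stdSymp2 z := by
  have hvert := (areaJacobianAt_stripVertical hb _).comp (f := stripRadial b)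
    (areaJacobianAt_stripRadial hb z)
  have hhoriz := areaJacobianAt_stripHorizontal (abs_im_stripVertical_lt b (stripRadial b z))
  refine (hhoriz.comp (f := stripVertical b ∘ stripRadial b) hvert).smoothPullbackAt ?_
  rw [cos_pi_mul_im_stripVertical hb, sq_norm_stripRadial_add_sq hb,
    Real.sqrt_sq (by positivity)]
  field_simp

theorem stripMap_injective (hb : 0 < b) : Function.Injective (stripMap b) := fun _ _ h =>
  stripRadial_injective hb (stripVertical_injective hb
    (stripHorizontal_injOn (abs_im_stripVertical_lt b _) (abs_im_stripVertical_lt b _) h))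

theorem abs_im_stripMap_lt (b : ℝ) (z : ℂ) : |(stripMap b z).im| < 1 / 2 :=
  abs_im_stripVertical_lt b _

theorem abs_re_stripMap_lt (hb : 0 < b) (z : ℂ) :
    |(stripMap b z).re| < π / 2 * ‖z‖ ^ 2 + b := by
  change |(stripRadial b z).re / Real.cos (π * (stripVertical b (stripRadial b z)).im)| < _
  rw [cos_pi_mul_im_stripVertical hb, sq_norm_stripRadial_add_sq hb,
    Real.sqrt_sq (by positivity), div_div_eq_mul_div, abs_div, abs_mul,
    abs_of_pos (by positivity : 0 < π / 2 * ‖z‖ ^ 2 + b), abs_of_nonneg (Real.sqrt_nonneg _),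
    div_lt_iff₀ (by positivity), mul_comm]
  gcongr
  exact Real.lt_sqrt_of_sq_lt (by rw [sq_abs]; linarith [pow_pos hb 2])

end StripMap

section BallEmbedding

open scoped Real

theorem eq_of_cotangentLift_shear_eq_add_angleShift {τ : ℝ} {w w' : ℂ × ℂ} {n : ℤ × ℤ}
    (hw₁ : |w.1.im| < 1 / 2) (hw₂ : |w.2.im| < 1 / 2)
    (hw'₁ : |w'.1.im| < 1 / 2) (hw'₂ : |w'.2.im| < 1 / 2)
    (h : cotangentLift 1 0 τ 1 0 w = cotangentLift 1 0 τ 1 0 w' + angleShift n) : w = w' := by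
  have eq_zero {k : ℤ} {q q' : ℝ} (hq : |q| < 1 / 2) (hq' : |q'| < 1 / 2) (hk : q = q' + k) :
      k = 0 := by
    rw [← Int.abs_lt_one_iff, ← Int.cast_lt (R := ℝ), Int.cast_abs, Int.cast_one,
      ← sub_eq_iff_eq_add'.2 hk]
    linarith [abs_sub q q']
  have hangles : w.1.im - τ * w.2.im = w'.1.im - τ * w'.2.im + n.1 ∧
      w.2.im = w'.2.im + n.2 := by
    have h₁ := congrArg (fun x : ℂ × ℂ => x.1.im) h
    have h₂ := congrArg (fun x : ℂ × ℂ => x.2.im) h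
    simp only [cotangentLift, cotangentLinear_apply, angleShift] at h₁ h₂
    simpa using And.intro h₁ h₂
  have hn₂ : n.2 = 0 := eq_zero hw₂ hw'₂ hangles.2
  have him₂ : w.2.im = w'.2.im := by simpa [hn₂] using hangles.2
  have hn₁ : n.1 = 0 := eq_zero hw₁ hw'₁ (by linear_combination hangles.1 + τ * him₂)
  refine cotangentLift_injective (by norm_num) 0 (h.trans ?_)
  simp [angleShift, hn₁, hn₂]

theorem abs_re_stripMap_add_abs_re_stripMap_lt {b r : ℝ} (hb : 0 < b) {z : ℂ × ℂ}
    (hz : z ∈ ball4 r) :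
    |(stripMap b z.1).re| + |(stripMap b z.2).re| < π / 2 * r ^ 2 + 2 * b := by
  have hz' : ‖z.1‖ ^ 2 + ‖z.2‖ ^ 2 < r ^ 2 := by
    simp only [Complex.sq_norm]
    exact hz
  calc |(stripMap b z.1).re| + |(stripMap b z.2).re|
      < (π / 2 * ‖z.1‖ ^ 2 + b) + (π / 2 * ‖z.2‖ ^ 2 + b) :=
        add_lt_add (abs_re_stripMap_lt hb z.1) (abs_re_stripMap_lt hb z.2)
    _ = π / 2 * (‖z.1‖ ^ 2 + ‖z.2‖ ^ 2) + 2 * b := by ring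
    _ ≤ π / 2 * r ^ 2 + 2 * b := by gcongr

theorem isOpen_ball4 (r : ℝ) : IsOpen (ball4 r) :=
  isOpen_lt (by fun_prop) continuous_const

/-- The ball is flattened by `stripMap × stripMap` to the product of `|P₁| + |P₂| < s` with the
open unit square of angles, where even a non-integral shear of the actions is injective modulo
the period lattice of the angles. -/
theorem symplecticEmbeds4_ball4_preimage_mu4 {W : Set (ℝ × ℝ)} {a b c d : ℤ} {τ s r : ℝ}
    {v : ℝ × ℝ} (hWpos : W ⊆ openQuadrant) (hdet : a * d - b * c = 1) (hr : π * r ^ 2 < 2 * s)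
    (hmaps : ∀ P : ℝ × ℝ, |P.1| + |P.2| < s →
      planeAffine a b c d v (planeAffine 1 0 τ 1 0 P) ∈ W) :
    SymplecticEmbeds4 (ball4 r) (mu4 ⁻¹' W) := by
  obtain ⟨ε, hε, hεs⟩ : ∃ ε > 0, π / 2 * r ^ 2 + 2 * ε = s :=
    ⟨(2 * s - π * r ^ 2) / 4, by linarith, by ring⟩
  let σ : ℂ × ℂ → ℂ × ℂ := Prod.map (stripMap ε) (stripMap ε)
  let S : ℂ × ℂ → ℂ × ℂ := cotangentLift 1 0 τ 1 0
  let L : ℂ × ℂ → ℂ × ℂ := cotangentLift a b c d v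
  have hLS {z : ℂ × ℂ} (hz : z ∈ ball4 r) : actions (L (S (σ z))) ∈ W :=
    hmaps (actions (σ z)) ((abs_re_stripMap_add_abs_re_stripMap_lt hε hz).trans_eq hεs)
  refine .of_symplecticAt (f := toricCoord ∘ L ∘ S ∘ σ) (isOpen_ball4 r) (fun z hz => ?_)
    (fun z hz z' hz' h => ?_) fun z hz => ?_
  · have hdetR : (a : ℝ) * d - b * c = 1 := by exact_mod_cast hdet
    exact (symplecticAt_toricCoord (hWpos (hLS hz))).comp (f := L ∘ S ∘ σ)
      ((symplecticAt_cotangentLift hdetR v _).comp (f := S ∘ σ)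
        ((symplecticAt_cotangentLift (by norm_num) 0 _).comp (f := σ)
          (SymplecticAt.prodMap (smoothPullbackAt_stripMap hε z.1)
            (smoothPullbackAt_stripMap hε z.2))))
  · obtain ⟨n, hn⟩ := (exists_cotangentLift_eq_add_angleShift_iff hdet v _ _).1
      ((toricCoord_eq_iff (hWpos (hLS hz)) (hWpos (hLS hz'))).1 h)
    exact (stripMap_injective hε).prodMap (stripMap_injective hε)
      (eq_of_cotangentLift_shear_eq_add_angleShift (abs_im_stripMap_lt ε _)
        (abs_im_stripMap_lt ε _) (abs_im_stripMap_lt ε _) (abs_im_stripMap_lt ε _) hn)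
  · change mu4 (toricCoord (L (S (σ z)))) ∈ W
    rw [mu4_toricCoord (hWpos (hLS hz))]
    exact hLS hz

end BallEmbedding

section Capacities

open scoped Real

/-- The Gromov width of `U`: the supremum of the areas `πr²` of balls embedding in `U`. -/
def gromovWidth (U : Set (ℂ × ℂ)) : ℝ≥0∞ :=
  ⨆ (r : ℝ) (_ : 0 < r) (_ : SymplecticEmbeds4 (ball4 r) U), ENNReal.ofReal (π * r ^ 2)

/-- The cylindrical capacity of `U`: the infimum of the areas `πr²` of cylinders into which `U`
embeds. -/
def cylindricalCapacity (U : Set (ℂ × ℂ)) : ℝ≥0∞ :=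
  ⨅ (r : ℝ) (_ : 0 < r) (_ : SymplecticEmbeds4 U (cyl4 r)), ENNReal.ofReal (π * r ^ 2)

variable {c : Set (ℂ × ℂ) → ℝ≥0∞}

theorem IsNormalizedCapacity4.gromovWidth_le (hc : IsNormalizedCapacity4 c) (U : Set (ℂ × ℂ)) :
    gromovWidth U ≤ c U :=
  iSup_le fun r => iSup₂_le fun hr hU => (hc.2.2 r hr).1 ▸ hc.1 _ _ hU

theorem IsNormalizedCapacity4.le_cylindricalCapacity (hc : IsNormalizedCapacity4 c)
    (U : Set (ℂ × ℂ)) : c U ≤ cylindricalCapacity U :=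
  le_iInf fun r => le_iInf₂ fun hr hU => (hc.2.2 r hr).2 ▸ hc.1 _ _ hU

theorem exists_pos_pi_mul_sq_eq {t : ℝ} (ht : 0 < t) : ∃ r > 0, π * r ^ 2 = t :=
  ⟨√(t / π), by positivity, by
    rw [Real.sq_sqrt (by positivity), mul_div_cancel₀ _ Real.pi_ne_zero]⟩

theorem le_gromovWidth_of_forall {U : Set (ℂ × ℂ)} {t : ℝ}
    (h : ∀ r > 0, π * r ^ 2 < t → SymplecticEmbeds4 (ball4 r) U) :
    ENNReal.ofReal t ≤ gromovWidth U := by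
  refine le_of_forall_lt fun x hx => ?_
  obtain ⟨y, hxy, hyt⟩ := exists_between hx
  lift y to NNReal using ne_top_of_lt hyt
  have hy : 0 < (y : ℝ) := NNReal.coe_pos.2 (ENNReal.coe_pos.1 (bot_le.trans_lt hxy))
  obtain ⟨r, hr, hry⟩ := exists_pos_pi_mul_sq_eq hy
  have hU : SymplecticEmbeds4 (ball4 r) U := h r hr (by
    rw [hry]
    exact ENNReal.lt_ofReal_iff_toReal_lt ENNReal.coe_ne_top |>.1 hyt)
  refine hxy.trans_le (le_trans ?_ (le_iSup₂_of_le r hr (le_iSup_of_le hU le_rfl)))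
  rw [hry, ENNReal.ofReal_coe_nnreal]

end Capacities

section ToricDomains

open scoped Real

/-- The linear functional `x ↦ ⟨m, x⟩` of an integral covector `m`. -/
def latticeFunctional (m : ℤ × ℤ) : ℝ × ℝ →L[ℝ] ℝ :=
  (m.1 : ℝ) • ContinuousLinearMap.fst ℝ ℝ ℝ + (m.2 : ℝ) • ContinuousLinearMap.snd ℝ ℝ ℝ

theorem latticeFunctional_apply (m : ℤ × ℤ) (x : ℝ × ℝ) :
    latticeFunctional m x = m.1 * x.1 + m.2 * x.2 := rfl

/-- An integral coordinate change makes `m` the first coordinate; the second one only has to be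
bounded below. -/
theorem cylindricalCapacity_preimage_mu4_le {U : Set (ℝ × ℝ)} {m : ℤ × ℤ} {lo hi : ℝ}
    (hU : IsOpen U) (hbdd : Bornology.IsBounded U) (hUpos : U ⊆ openQuadrant)
    (hm : IsCoprime m.1 m.2) (hlohi : lo < hi) (hmU : MapsTo (latticeFunctional m) U (Ioo lo hi)) :
    cylindricalCapacity (mu4 ⁻¹' U) ≤ ENNReal.ofReal (hi - lo) := by
  obtain ⟨k, l, hkl⟩ := hm
  obtain ⟨r, hr, hrw⟩ := exists_pos_pi_mul_sq_eq (sub_pos.2 hlohi)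
  obtain ⟨K, hK⟩ : BddBelow (latticeFunctional (-l, k) '' U) :=
    (hbdd.image (latticeFunctional (-l, k))).bddBelow
  have hembeds := symplecticEmbeds4_preimage_mu4_of_planeAffine
    (W' := {P | 0 < P.1 ∧ P.1 < hi - lo ∧ 0 < P.2}) (a := m.1) (b := m.2) (c := -l) (d := k)
    (v := (-lo, 1 - K)) hU hUpos (fun P hP => ⟨hP.1, hP.2.2⟩) (by linear_combination hkl)
    fun P hP => by
      obtain ⟨h₁, h₂⟩ := hmU hP
      have h₃ := hK (mem_image_of_mem _ hP)
      simp only [latticeFunctional_apply, Int.cast_neg] at h₁ h₂ h₃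
      refine ⟨?_, ?_, ?_⟩ <;> simp only [planeAffine, Int.cast_neg] <;> linarith
  have hcyl : mu4 ⁻¹' {P | 0 < P.1 ∧ P.1 < hi - lo ∧ 0 < P.2} ⊆ cyl4 r := fun z hz =>
    lt_of_mul_lt_mul_left (hrw ▸ hz.2.1) Real.pi_pos.le
  refine (iInf_le_of_le r (iInf₂_le_of_le hr ?_ le_rfl)).trans_eq (by rw [hrw])
  obtain ⟨f, hsmooth, hinj, hmaps, hsymp⟩ := hembeds
  exact ⟨f, hsmooth, hinj, hmaps.mono_right hcyl, hsymp⟩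

/-- In integral coordinates with first coordinate `m` the parallelogram becomes a shear of the
square `|x| + |y| < s`. -/
theorem le_gromovWidth_preimage_mu4 {U : Set (ℝ × ℝ)} {m : ℤ × ℤ} {v p : ℝ × ℝ}
    {s : ℝ} (hUpos : U ⊆ openQuadrant) (hm : IsCoprime m.1 m.2) (hs : 0 < s)
    (hmp : latticeFunctional m p = s)
    (hU : ∀ x y : ℝ, |x| + |y| < 1 → x • p + y • (-(s * m.2), s * m.1) + v ∈ U) :
    ENNReal.ofReal (2 * s) ≤ gromovWidth (mu4 ⁻¹' U) := by
  obtain ⟨k, l, hkl⟩ := hm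
  refine le_gromovWidth_of_forall fun r _ hr =>
    symplecticEmbeds4_ball4_preimage_mu4 (a := k) (b := -m.2) (c := l) (d := m.1)
      (τ := (k * p.2 - l * p.1) / s) (v := v) hUpos (by linear_combination hkl) hr fun P hP => ?_
  have hklR : (k : ℝ) * m.1 + l * m.2 = 1 := by exact_mod_cast hkl
  rw [latticeFunctional_apply] at hmp
  convert hU (P.1 / s) (P.2 / s) ?_ using 1
  · ext
    · simp only [planeAffine, Prod.fst_add, Prod.smul_fst, smul_eq_mul, Int.cast_neg,
        Prod.fst_zero, Prod.snd_zero]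
      field_simp
      linear_combination P.1 * p.1 * hklR - P.1 * k * hmp
    · simp only [planeAffine, Prod.snd_add, Prod.smul_snd, smul_eq_mul, Prod.fst_zero,
        Prod.snd_zero]
      field_simp
      linear_combination P.1 * p.2 * hklR - P.1 * l * hmp
  · rwa [abs_div, abs_div, abs_of_pos hs, ← add_div, div_lt_one hs]

end ToricDomains

section ConvexGeometry

open MeasureTheory
open scoped Topology

theorem neg_mem_of_eq_neg {E : Type*} [InvolutiveNeg E] {A : Set E} (hsym : A = -A) {x : E}
    (hx : x ∈ A) : -x ∈ A := by
  rw [hsym]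
  exact neg_mem_neg.2 hx

theorem interior_eq_neg_interior {E : Type*} [TopologicalSpace E] [InvolutiveNeg E]
    [ContinuousNeg E] {A : Set E} (hsym : A = -A) : interior A = -interior A := by
  conv_lhs => rw [hsym]
  exact ((Homeomorph.neg E).preimage_interior A).symm

variable {E : Type*} [AddCommGroup E] [Module ℝ E] [TopologicalSpace E]
  [IsTopologicalAddGroup E] [ContinuousSMul ℝ E] {A : Set E}

theorem zero_mem_interior_of_eq_neg (hconv : Convex ℝ A) (hint : (interior A).Nonempty)
    (hsym : A = -A) : (0 : E) ∈ interior A := by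
  obtain ⟨x, hx⟩ := hint
  have hneg := neg_mem_of_eq_neg (interior_eq_neg_interior hsym) hx
  simpa using hconv.interior.midpoint_mem hx hneg

theorem smul_add_smul_mem_interior (hconv : Convex ℝ A) (hint : (interior A).Nonempty)
    (hsym : A = -A) {p q : E} (hp : p ∈ A) (hq : q ∈ A) {x y : ℝ} (h : |x| + |y| < 1) :
    x • p + y • q ∈ interior A := by
  have hnhds : A ∈ 𝓝 0 :=
    mem_interior_iff_mem_nhds.1 (zero_mem_interior_of_eq_neg hconv hint hsym)
  have hgauge {p : E} (hp : p ∈ A) (x : ℝ) : gauge A (x • p) ≤ |x| := by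
    have habs : gauge A (x • p) = gauge A (|x| • p) := by
      rcases abs_choice x with hx | hx
      · rw [hx]
      · rw [hx, neg_smul, gauge_neg fun _ => neg_mem_of_eq_neg hsym]
    rw [habs, gauge_smul_of_nonneg (abs_nonneg x)]
    exact mul_le_of_le_one_right (abs_nonneg x) (gauge_le_one_of_mem hp)
  rw [← gauge_lt_one_iff_mem_interior hconv hnhds]
  exact ((gauge_add_le hconv (absorbent_nhds_zero hnhds) _ _).trans
    (add_le_add (hgauge hp x) (hgauge hq y))).trans_lt h

theorem lt_of_mem_interior_of_forall_le {f : E →L[ℝ] ℝ} (hf : f ≠ 0) {s : ℝ}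
    (hs : ∀ x ∈ A, f x ≤ s) {x : E} (hx : x ∈ interior A) : f x < s := by
  have hopen : IsOpen (f '' interior A) := f.isOpenMap_of_ne_zero hf _ isOpen_interior
  have hsub : f '' interior A ⊆ Iic s := image_subset_iff.2 fun y hy => hs y (interior_subset hy)
  have := interior_maximal hsub hopen (mem_image_of_mem f hx)
  rwa [interior_Iic] at this

theorem volume_parallelogram {a b c d s u : ℝ} (hdet : a * d - b * c ≠ 0) (hs : 0 ≤ s) :
    volume {x : ℝ × ℝ | |a * x.1 + b * x.2| ≤ s ∧ |c * x.1 + d * x.2| ≤ u} =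
      ENNReal.ofReal (4 * s * u / |a * d - b * c|) := by
  let T : (ℝ × ℝ) →ₗ[ℝ] (ℝ × ℝ) := Matrix.toLin (Module.Basis.finTwoProd ℝ)
    (Module.Basis.finTwoProd ℝ) !![a, b; c, d]
  have hT : LinearMap.det T = a * d - b * c := by
    rw [LinearMap.det_toLin, Matrix.det_fin_two_of]
  have hpre : {x : ℝ × ℝ | |a * x.1 + b * x.2| ≤ s ∧ |c * x.1 + d * x.2| ≤ u} =
      T ⁻¹' (Icc (-s) s ×ˢ Icc (-u) u) := by
    ext x
    simp only [T, mem_preimage, Matrix.toLin_finTwoProd_apply, mem_prod, mem_Icc, mem_ofPred_eq,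
      abs_le]
  rw [hpre, Measure.addHaar_preimage_linearMap _ (hT ▸ hdet), hT, Measure.volume_eq_prod,
    Measure.prod_prod, Real.volume_Icc, Real.volume_Icc, ← ENNReal.ofReal_mul (by linarith),
    ← ENNReal.ofReal_mul (abs_nonneg _), abs_inv]
  congr 1
  ring

/-- A functional separating the point from `A` would confine `A` to a parallelogram of area
smaller than `4st`. -/
theorem mem_of_four_mul_le_volume {A : Set (ℝ × ℝ)} (hclosed : IsClosed A) (hconv : Convex ℝ A)
    (hne : A.Nonempty) (hsym : A = -A) {m : ℝ × ℝ} {s t : ℝ} (hs : 0 < s) (ht : 0 ≤ t)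
    (hm : ∀ x ∈ A, m.1 * x.1 + m.2 * x.2 ≤ s) (hvol : ENNReal.ofReal (4 * s * t) ≤ volume A) :
    (-(t * m.2), t * m.1) ∈ A := by
  by_contra hmem
  obtain ⟨g, u, hgA, hgu⟩ := geometric_hahn_banach_closed_point hconv hclosed hmem
  have hg (x : ℝ × ℝ) : g x = g (1, 0) * x.1 + g (0, 1) * x.2 := by
    conv_lhs => rw [show x = x.1 • (1, 0) + x.2 • (0, 1) by ext <;> simp]
    rw [map_add, map_smul, map_smul, smul_eq_mul, smul_eq_mul, mul_comm, mul_comm x.2]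
  have habs {h : (ℝ × ℝ) →L[ℝ] ℝ} {k : ℝ} (hk : ∀ x ∈ A, h x ≤ k) (x : ℝ × ℝ) (hx : x ∈ A) :
      |h x| ≤ k :=
    abs_le'.2 ⟨hk x hx, map_neg h x ▸ hk _ (neg_mem_of_eq_neg hsym hx)⟩
  have hgabs := habs fun x hx => (hgA x hx).le
  obtain ⟨x₀, hx₀⟩ := hne
  have hu : 0 ≤ u := (abs_nonneg _).trans (hgabs x₀ hx₀)
  set δ : ℝ := m.1 * g (0, 1) - m.2 * g (1, 0) with hδ
  have hut : u < t * δ := by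
    rw [hg] at hgu
    linear_combination hgu
  have hδpos : 0 < δ := pos_of_mul_pos_right (hu.trans_lt hut) ht
  have hsub : A ⊆ {x | |m.1 * x.1 + m.2 * x.2| ≤ s ∧ |g (1, 0) * x.1 + g (0, 1) * x.2| ≤ u} :=
    fun x hx => ⟨habs (h := m.1 • .fst ℝ ℝ ℝ + m.2 • .snd ℝ ℝ ℝ) hm x hx, hg x ▸ hgabs x hx⟩
  have hle := hvol.trans (measure_mono hsub)
  rw [volume_parallelogram hδpos.ne' hs.le, ENNReal.ofReal_le_ofReal_iff (by positivity),
    ← hδ, abs_of_pos hδpos, le_div_iff₀ hδpos] at hle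
  nlinarith

end ConvexGeometry

section SupportFunction

/-- The support function `m ↦ sup_{x ∈ A} ⟨m, x⟩` of `A` on integral covectors. -/
def supportFunction (A : Set (ℝ × ℝ)) (m : ℤ × ℤ) : ℝ := sSup (latticeFunctional m '' A)

variable {A : Set (ℝ × ℝ)}

theorem latticeFunctional_ne_zero {m : ℤ × ℤ} (hm : m ≠ 0) : latticeFunctional m ≠ 0 := by
  contrapose! hm
  have h₁ := DFunLike.congr_fun hm (1, 0)
  have h₂ := DFunLike.congr_fun hm (0, 1)
  ext
  · simpa [latticeFunctional_apply] using h₁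
  · simpa [latticeFunctional_apply] using h₂

theorem latticeFunctional_nsmul (n : ℕ) (m : ℤ × ℤ) :
    latticeFunctional (n • m) = (n : ℝ) • latticeFunctional m := by
  ext <;> simp [latticeFunctional_apply]

theorem le_supportFunction (hA : IsCompact A) (m : ℤ × ℤ) {x : ℝ × ℝ} (hx : x ∈ A) :
    latticeFunctional m x ≤ supportFunction A m :=
  le_csSup (hA.image (latticeFunctional m).continuous).bddAbove (mem_image_of_mem _ hx)

theorem exists_latticeFunctional_eq_supportFunction (hA : IsCompact A) (hne : A.Nonempty)
    (m : ℤ × ℤ) : ∃ x ∈ A, latticeFunctional m x = supportFunction A m :=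
  (hA.image (latticeFunctional m).continuous).sSup_mem (hne.image _)

theorem lt_supportFunction_of_mem_interior (hA : IsCompact A) {m : ℤ × ℤ} (hm : m ≠ 0)
    {x : ℝ × ℝ} (hx : x ∈ interior A) : latticeFunctional m x < supportFunction A m :=
  lt_of_mem_interior_of_forall_le (latticeFunctional_ne_zero hm)
    (fun _ => le_supportFunction hA m) hx

theorem supportFunction_pos (hA : IsCompact A) (hconv : Convex ℝ A) (hint : (interior A).Nonempty)
    (hsym : A = -A) {m : ℤ × ℤ} (hm : m ≠ 0) : 0 < supportFunction A m := by
  simpa using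
    lt_supportFunction_of_mem_interior hA hm (zero_mem_interior_of_eq_neg hconv hint hsym)

theorem supportFunction_nsmul (A : Set (ℝ × ℝ)) (n : ℕ) (m : ℤ × ℤ) :
    supportFunction A (n • m) = n * supportFunction A m := by
  rw [supportFunction, supportFunction, latticeFunctional_nsmul, ← smul_eq_mul,
    ← Real.sSup_smul_of_nonneg n.cast_nonneg, ← image_smul, image_image]
  rfl

theorem exists_isCoprime_nsmul_eq {m : ℤ × ℤ} (hm : m ≠ 0) :
    ∃ (n : ℕ) (k : ℤ × ℤ), 0 < n ∧ IsCoprime k.1 k.2 ∧ m = n • k := by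
  have hgcd : 0 < Int.gcd m.1 m.2 :=
    Nat.pos_of_ne_zero fun h => hm (Prod.ext_iff.2 (Int.gcd_eq_zero_iff.1 h))
  obtain ⟨n, k₁, k₂, hn, hk, h₁, h₂⟩ := Int.exists_gcd_one' hgcd
  refine ⟨n, (k₁, k₂), hn, Int.isCoprime_iff_gcd_eq_one.2 hk, ?_⟩
  ext <;> simp [h₁, h₂, mul_comm]

theorem isCoprime_of_forall_supportFunction_le {m : ℤ × ℤ} (hm : m ≠ 0)
    (hpos : 0 < supportFunction A m)
    (hmin : ∀ k : ℤ × ℤ, k ≠ 0 → supportFunction A m ≤ supportFunction A k) :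
    IsCoprime m.1 m.2 := by
  obtain ⟨n, k, hn, hk, rfl⟩ := exists_isCoprime_nsmul_eq hm
  have hle := hmin k (right_ne_zero_of_smul hm)
  rw [supportFunction_nsmul] at hpos hle
  have hkpos : 0 < supportFunction A k := pos_of_mul_pos_right hpos n.cast_nonneg
  have hn1 : n = 1 := by
    have : (n : ℝ) ≤ 1 := (mul_le_iff_le_one_left hkpos).1 hle
    exact le_antisymm (by exact_mod_cast this) hn
  simpa [hn1] using hk

end SupportFunction

section Codisc

variable {A : Set (ℝ × ℝ)} {m : ℤ × ℤ} {v : ℝ × ℝ}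

theorem cylindricalCapacity_codisc_le (hA : IsCompact A) (hconv : Convex ℝ A)
    (hint : (interior A).Nonempty) (hsym : A = -A) (hm : IsCoprime m.1 m.2)
    (hpos : (· + v) '' interior A ⊆ openQuadrant) :
    cylindricalCapacity (mu4 ⁻¹' ((· + v) '' interior A)) ≤
      ENNReal.ofReal (2 * supportFunction A m) := by
  have hm0 : m ≠ 0 := fun h => not_isCoprime_zero_zero (h ▸ hm)
  have hs := supportFunction_pos hA hconv hint hsym hm0
  have hbdd : Bornology.IsBounded ((· + v) '' interior A) :=
    (hA.image (continuous_add_const v)).isBounded.subset (image_mono interior_subset)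
  have hslab : MapsTo (latticeFunctional m) ((· + v) '' interior A)
      (Ioo (latticeFunctional m v - supportFunction A m)
        (latticeFunctional m v + supportFunction A m)) := by
    rintro _ ⟨x, hx, rfl⟩
    have hlt := lt_supportFunction_of_mem_interior hA hm0 hx
    have hneg := lt_supportFunction_of_mem_interior hA hm0
      (neg_mem_of_eq_neg (interior_eq_neg_interior hsym) hx)
    rw [map_neg] at hneg
    rw [map_add]
    constructor <;> linarith
  refine (cylindricalCapacity_preimage_mu4_le (isOpenMap_add_right v _ isOpen_interior) hbdd hpos
    hm (by linarith) hslab).trans_eq ?_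
  ring_nf

theorem le_gromovWidth_codisc (hA : IsCompact A) (hconv : Convex ℝ A)
    (hint : (interior A).Nonempty) (hsym : A = -A) (hm : IsCoprime m.1 m.2)
    (hpos : (· + v) '' interior A ⊆ openQuadrant)
    (hvol : ENNReal.ofReal (4 * supportFunction A m ^ 2) ≤ MeasureTheory.volume A) :
    ENNReal.ofReal (2 * supportFunction A m) ≤
      gromovWidth (mu4 ⁻¹' ((· + v) '' interior A)) := by
  have hs : 0 < supportFunction A m :=
    supportFunction_pos hA hconv hint hsym fun h => not_isCoprime_zero_zero (h ▸ hm)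
  have hne : A.Nonempty := hint.mono interior_subset
  obtain ⟨p, hp, hmp⟩ := exists_latticeFunctional_eq_supportFunction hA hne m
  have hq : (-(supportFunction A m * m.2), supportFunction A m * m.1) ∈ A :=
    mem_of_four_mul_le_volume (m := (m.1, m.2)) hA.isClosed hconv hne hsym hs hs.le
      (fun _ => le_supportFunction hA m) (by rwa [mul_assoc, ← sq])
  exact le_gromovWidth_preimage_mu4 hpos hm hs hmp fun x y hxy =>
    mem_image_of_mem _ (smul_add_smul_mem_interior hconv hint hsym hp hq hxy)

end Codisc

/-- Let `A ⊂ ℝ²` be compact, centrally symmetric, convex with nonempty interior, and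
let `s` be the minimum over `m ∈ ℤ² ∖ {0}` of the support function of `A` (the systole
of the corresponding codisc bundle).  If `area(A) ≥ 4s²` (systolic ratio at most `1/8`),
then for every translate of `interior A` into the open positive quadrant and every
normalized symplectic capacity `c` on subsets of `ℝ⁴`,
`c(μ⁻¹(interior A + v)) = 2s`. -/
theorem capacity_small_systolic_ratio_codisc
    (A : Set (ℝ × ℝ)) (hAcomp : IsCompact A) (hAconv : Convex ℝ A)
    (hAint : (interior A).Nonempty) (hAsym : A = -A)
    (s : ℝ)
    (hs : IsLeast
      {t : ℝ | ∃ m : ℤ × ℤ, m ≠ 0 ∧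
        t = sSup ((fun x : ℝ × ℝ => (m.1 : ℝ) * x.1 + (m.2 : ℝ) * x.2) '' A)} s)
    (harea : 4 * s ^ 2 ≤ (MeasureTheory.volume A).toReal) :
    ∀ v : ℝ × ℝ, (∀ x ∈ interior A, 0 < (x : ℝ × ℝ).1 + v.1 ∧ 0 < x.2 + v.2) →
      ∀ c : Set (ℂ × ℂ) → ℝ≥0∞, IsNormalizedCapacity4 c →
        c (mu4 ⁻¹' ((fun x : ℝ × ℝ => x + v) '' interior A)) =
          ENNReal.ofReal (2 * s) := by
  intro v hv c hc
  obtain ⟨⟨m, hm, rfl⟩, hleast⟩ := hs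
  have hcop : IsCoprime m.1 m.2 :=
    isCoprime_of_forall_supportFunction_le hm (supportFunction_pos hAcomp hAconv hAint hAsym hm)
      fun k hk => hleast ⟨k, hk, rfl⟩
  have hpos : (· + v) '' interior A ⊆ openQuadrant := image_subset_iff.2 hv
  apply le_antisymm
  · exact (hc.le_cylindricalCapacity _).trans
      (cylindricalCapacity_codisc_le hAcomp hAconv hAint hAsym hcop hpos)
  · exact (le_gromovWidth_codisc hAcomp hAconv hAint hAsym hcop hpos
      (ENNReal.ofReal_le_of_le_toReal harea)).trans (hc.gromovWidth_le _)
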